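/- Let ℓ ≥ 1, ℓ′ ≥ 1, γ′ = (γ′_1,…,γ′_{ℓ′}) ∈ (ℕ*)^{ℓ′}, and n ≥ ℓ + ℓ′. Let σ_n be a conjugation-invariant random permutation of {1,…,n} with P(σ_n ∈ A^{γ′}) > 0, where A^{γ′} := {σ ∈ S_n : c_j(σ) = γ′_j for all 1 ≤ j ≤ ℓ′, and the points 1,…,ℓ′ lie in pairwise distinct cycles of σ}. Then P( σ_n^j(i) ∉ {ℓ′+1, …, ℓ′+ℓ} for all 1 ≤ i ≤ ℓ′ and all 1 ≤ j ≤ γ′_i − 1 | σ_n ∈ A^{γ′} ) ≥ 1 − Σ_{i=1}^{ℓ′} ℓ·(γ′_i − 1)/(n − ℓ′). -/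

import Mathlib

/-!
The argument is a union bound combined with exchangeability. Fix one of the first `ℓ'` points `i`
and an exponent `j`. The event `A^{γ'}` only refers to the first `ℓ'` points, so it is preserved
under conjugation by any permutation fixing these points. Conjugating by a transposition of two
points `k, k'` outside the first `ℓ'` shows that `P(A^{γ'}, σ^j(i) = k)` does not depend on `k`
(`prob_hit_eq`). These `n - ℓ'` events are disjoint subevents of `A^{γ'}`, hence each has probability
at most `P(A^{γ'}) / (n - ℓ')` (`card_mul_prob_hit_le`). If avoidance fails, one of these events
occurs for some `i`, some `1 ≤ j ≤ γ'_i - 1` and one of `ℓ` values of `k`, and summing over these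
triples gives the bound.
-/


noncomputable section

/-- Length of the cycle of `σ` containing the point `x`. -/
def cycLen {n : ℕ} (σ : Equiv.Perm (Fin n)) (x : Fin n) : ℕ :=
  Function.minimalPeriod σ x

/-- Probability of a set under a discrete distribution. -/
def prob {α : Type*} [Fintype α] (p : α → ℝ) (S : Set α) : ℝ :=
  ∑ x, S.indicator p x

/-- Union bound, in the form used for the complement of the avoidance event inside `A`. -/
theorem prob_le_add_sum {α ι : Type*} [Fintype α] {p : α → ℝ} (hp : ∀ x, 0 ≤ p x)
    (A G : Set α) (T : Finset ι) (B : ι → Set α)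
    (h : ∀ x ∈ A, x ∉ G → ∃ t ∈ T, x ∈ B t) :
    prob p A ≤ prob p (G ∩ A) + ∑ t ∈ T, prob p (B t) := by
  unfold prob
  rw [Finset.sum_comm, ← Finset.sum_add_distrib]
  refine Finset.sum_le_sum fun x _ => ?_
  have hn : ∀ S : Set α, 0 ≤ S.indicator p x := fun S => Set.indicator_nonneg (fun y _ => hp y) x
  have hs : 0 ≤ ∑ t ∈ T, (B t).indicator p x := Finset.sum_nonneg fun t _ => hn _
  by_cases hA : x ∈ A
  · by_cases hG : x ∈ G
    · rw [Set.indicator_of_mem hA, Set.indicator_of_mem (Set.mem_inter hG hA)]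
      linarith
    · obtain ⟨t, ht, hx⟩ := h x hA hG
      have h1 := Finset.single_le_sum (f := fun t => (B t).indicator p x) (fun t _ => hn _) ht
      simp only [Set.indicator_of_mem hx] at h1
      rw [Set.indicator_of_mem hA]
      linarith [hn (G ∩ A)]
  · rw [Set.indicator_of_notMem hA]
    linarith [hn (G ∩ A)]

theorem conj_pow_apply {α : Type*} (τ σ : Equiv.Perm α) (j : ℕ) (x : α) :
    ((τ⁻¹ * σ * τ) ^ j) x = τ⁻¹ ((σ ^ j) (τ x)) := by
  have h := conj_pow (a := τ⁻¹) (b := σ) (i := j)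
  rw [inv_inv] at h
  rw [h]
  rfl

theorem cycLen_conj {n : ℕ} (τ σ : Equiv.Perm (Fin n)) (x : Fin n) :
    cycLen (τ⁻¹ * σ * τ) x = cycLen σ (τ x) := by
  unfold cycLen
  rw [Function.minimalPeriod_eq_minimalPeriod_iff]
  intro m
  simp only [Function.IsPeriodicPt, Function.IsFixedPt, Equiv.Perm.iterate_eq_pow, conj_pow_apply]
  rw [Equiv.Perm.inv_eq_iff_eq]

theorem sameCycle_conj' {α : Type*} (τ σ : Equiv.Perm α) (x y : α) :
    (τ⁻¹ * σ * τ).SameCycle x y ↔ σ.SameCycle (τ x) (τ y) := by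
  have h := Equiv.Perm.sameCycle_conj (f := σ) (g := τ⁻¹) (x := x) (y := y)
  simpa using h

theorem prob_conj {G : Type*} [Group G] [Fintype G] {p : G → ℝ}
    (hconj : ∀ τ σ : G, p (τ⁻¹ * σ * τ) = p σ) (τ : G) (S : Set G) :
    prob p {σ | τ⁻¹ * σ * τ ∈ S} = prob p S := by
  unfold prob
  rw [← Equiv.sum_comp (MulAut.conj τ⁻¹).toEquiv (fun σ => S.indicator p σ)]
  refine Finset.sum_congr rfl fun σ _ => ?_
  have h : (MulAut.conj τ⁻¹).toEquiv σ = τ⁻¹ * σ * τ := by simp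
  rw [h]
  simp only [Set.indicator, Set.mem_ofPred_eq, hconj]

/-- Exchangeability: for an event `A` stable under conjugation by permutations fixing `F`, the
probability of `A ∩ {σ^j(x) = k}` with `x ∈ F` is the same for all `k` outside `F`. -/
theorem prob_hit_eq {α : Type*} [Fintype α] [DecidableEq α] {p : Equiv.Perm α → ℝ}
    (hconj : ∀ τ σ : Equiv.Perm α, p (τ⁻¹ * σ * τ) = p σ) (F : Set α) (A : Set (Equiv.Perm α))
    (hA : ∀ τ σ : Equiv.Perm α, (∀ x ∈ F, τ x = x) → (τ⁻¹ * σ * τ ∈ A ↔ σ ∈ A))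
    {x k k' : α} (hx : x ∈ F) (hk : k ∉ F) (hk' : k' ∉ F) (j : ℕ) :
    prob p {σ | σ ∈ A ∧ (σ ^ j) x = k} = prob p {σ | σ ∈ A ∧ (σ ^ j) x = k'} := by
  rw [← prob_conj hconj (Equiv.swap k k') {σ | σ ∈ A ∧ (σ ^ j) x = k}]
  have hfix : ∀ y ∈ F, Equiv.swap k k' y = y := fun y hy =>
    Equiv.swap_apply_of_ne_of_ne (fun h => hk (h ▸ hy)) (fun h => hk' (h ▸ hy))
  congr 1
  ext σ
  simp only [Set.mem_ofPred_eq, hA _ σ hfix, conj_pow_apply, hfix x hx, Equiv.Perm.inv_eq_iff_eq,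
    Equiv.swap_apply_left]

theorem card_mul_prob_hit_le {α : Type*} [Fintype α] [DecidableEq α] {p : Equiv.Perm α → ℝ}
    (hpos : ∀ σ, 0 ≤ p σ)
    (hconj : ∀ τ σ : Equiv.Perm α, p (τ⁻¹ * σ * τ) = p σ) (F : Set α) (A : Set (Equiv.Perm α))
    (hA : ∀ τ σ : Equiv.Perm α, (∀ x ∈ F, τ x = x) → (τ⁻¹ * σ * τ ∈ A ↔ σ ∈ A))
    (K : Finset α) (hK : ∀ k ∈ K, k ∉ F)
    {x k : α} (hx : x ∈ F) (hk : k ∉ F) (j : ℕ) :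
    (K.card : ℝ) * prob p {σ | σ ∈ A ∧ (σ ^ j) x = k} ≤ prob p A := by
  rw [← nsmul_eq_mul, ← Finset.sum_const]
  rw [Finset.sum_congr rfl fun k' hk' => prob_hit_eq hconj F A hA hx hk (hK k' hk') j]
  unfold prob
  rw [Finset.sum_comm]
  refine Finset.sum_le_sum fun σ _ => ?_
  by_cases hσ : σ ∈ A
  · simp only [Set.indicator, Set.mem_ofPred_eq, hσ, true_and, if_true]
    rw [Finset.sum_ite_eq]
    split_ifs
    exacts [le_rfl, hpos σ]
  · simp [Set.indicator, hσ]

/-- For a conjugation-invariant random permutation `σ_n`, conditionally on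
`A^{γ'}` (for `1 ≤ j ≤ ℓ'`, the point `j` lies in a cycle of length `γ'_j`, these
cycles being pairwise distinct), the probability that no iterate `σ_n^j(i)`
(`1 ≤ i ≤ ℓ'`, `1 ≤ j ≤ γ'_i - 1`) lands in `{ℓ'+1,…,ℓ'+ℓ}` is at least
`1 - ∑_i ℓ·(γ'_i - 1)/(n - ℓ')`. -/
theorem conditional_avoidance_bound
    {n ℓ ℓ' : ℕ} (hℓ : 1 ≤ ℓ) (hℓ' : 1 ≤ ℓ')
    (γ' : Fin ℓ' → ℕ) (hγ' : ∀ i, 1 ≤ γ' i)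
    (hn : ℓ + ℓ' ≤ n) (hℓ'n : ℓ' ≤ n)
    (p : Equiv.Perm (Fin n) → ℝ)
    (hpos : ∀ σ, 0 ≤ p σ) (hsum : ∑ σ, p σ = 1)
    (hconj : ∀ τ σ : Equiv.Perm (Fin n), p (τ⁻¹ * σ * τ) = p σ)
    (hA : 0 < prob p {σ | (∀ j : Fin ℓ', cycLen σ (Fin.castLE hℓ'n j) = γ' j) ∧
      ∀ j j' : Fin ℓ', j ≠ j' →
        ¬ σ.SameCycle (Fin.castLE hℓ'n j) (Fin.castLE hℓ'n j')}) :
    1 - ∑ i, (ℓ : ℝ) * ((γ' i : ℝ) - 1) / ((n : ℝ) - (ℓ' : ℝ))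
      ≤ prob p ({σ | ∀ i : Fin ℓ', ∀ j : ℕ, 1 ≤ j → j ≤ γ' i - 1 →
            ¬ (ℓ' ≤ (((σ ^ j) (Fin.castLE hℓ'n i) : Fin n) : ℕ) ∧
              (((σ ^ j) (Fin.castLE hℓ'n i) : Fin n) : ℕ) < ℓ' + ℓ)} ∩
          {σ | (∀ j : Fin ℓ', cycLen σ (Fin.castLE hℓ'n j) = γ' j) ∧
            ∀ j j' : Fin ℓ', j ≠ j' →
              ¬ σ.SameCycle (Fin.castLE hℓ'n j) (Fin.castLE hℓ'n j')})
        / prob p {σ | (∀ j : Fin ℓ', cycLen σ (Fin.castLE hℓ'n j) = γ' j) ∧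
            ∀ j j' : Fin ℓ', j ≠ j' →
              ¬ σ.SameCycle (Fin.castLE hℓ'n j) (Fin.castLE hℓ'n j')} := by
  set A : Set (Equiv.Perm (Fin n)) :=
    {σ | (∀ j : Fin ℓ', cycLen σ (Fin.castLE hℓ'n j) = γ' j) ∧
      ∀ j j' : Fin ℓ', j ≠ j' →
        ¬ σ.SameCycle (Fin.castLE hℓ'n j) (Fin.castLE hℓ'n j')} with hAdef
  set G : Set (Equiv.Perm (Fin n)) := {σ | ∀ i : Fin ℓ', ∀ j : ℕ, 1 ≤ j → j ≤ γ' i - 1 →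
            ¬ (ℓ' ≤ (((σ ^ j) (Fin.castLE hℓ'n i) : Fin n) : ℕ) ∧
              (((σ ^ j) (Fin.castLE hℓ'n i) : Fin n) : ℕ) < ℓ' + ℓ)} with hGdef
  let F : Set (Fin n) := {x | (x : ℕ) < ℓ'}
  have hF : ∀ i : Fin ℓ', Fin.castLE hℓ'n i ∈ F := fun i => i.2
  have hinv : ∀ τ σ : Equiv.Perm (Fin n), (∀ x ∈ F, τ x = x) → (τ⁻¹ * σ * τ ∈ A ↔ σ ∈ A) := by
    intro τ σ hτ
    have h' : ∀ i : Fin ℓ', τ (Fin.castLE hℓ'n i) = Fin.castLE hℓ'n i := fun i => hτ _ (hF i)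
    simp only [hAdef, Set.mem_ofPred_eq, cycLen_conj, sameCycle_conj', h']
  have hm : (0 : ℝ) < (n : ℝ) - (ℓ' : ℝ) := by
    have : (ℓ' : ℝ) + 1 ≤ n := by exact_mod_cast (by omega : ℓ' + 1 ≤ n)
    linarith
  let K : Finset (Fin n) := Finset.univ.filter fun k => ℓ' ≤ (k : ℕ)
  have hKcard : (K.card : ℝ) = (n : ℝ) - (ℓ' : ℝ) := by
    have h := Finset.card_filter_add_card_filter_not (s := (Finset.univ : Finset (Fin n)))
      (fun k => (k : ℕ) < ℓ')
    rw [Fin.card_filter_val_lt, Finset.card_univ, Fintype.card_fin, min_eq_right hℓ'n] at h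
    simp only [not_lt] at h
    rw [eq_sub_iff_add_eq']
    exact_mod_cast h
  have hhit : ∀ (i : Fin ℓ') (j : ℕ) (k : Fin n), ℓ' ≤ (k : ℕ) →
      prob p {σ | σ ∈ A ∧ (σ ^ j) (Fin.castLE hℓ'n i) = k}
        ≤ prob p A / ((n : ℝ) - (ℓ' : ℝ)) := by
    intro i j k hk
    have h := card_mul_prob_hit_le hpos hconj F A hinv K
      (fun k' hk' => not_lt.mpr (Finset.mem_filter.mp hk').2) (hF i)
      (show k ∉ F from not_lt.mpr hk) j
    rw [hKcard] at h
    rw [le_div_iff₀' hm]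
    exact h
  let L : Finset (Fin n) := Finset.univ.filter fun k => ℓ' ≤ (k : ℕ) ∧ (k : ℕ) < ℓ' + ℓ
  have hLcard : L.card ≤ ℓ := by
    have h := Finset.card_le_card_of_injOn (s := L) (t := Finset.Ico ℓ' (ℓ' + ℓ))
      (fun k : Fin n => (k : ℕ))
      (fun k hk => Finset.mem_coe.mpr (Finset.mem_Ico.mpr (Finset.mem_filter.mp hk).2))
      (Fin.val_injective.injOn)
    simpa using h
  have hunion := prob_le_add_sum hpos A G
    (Finset.univ.sigma fun i : Fin ℓ' => Finset.Icc 1 (γ' i - 1) ×ˢ L)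
    (fun t => {σ | σ ∈ A ∧ (σ ^ t.2.1) (Fin.castLE hℓ'n t.1) = t.2.2}) (by
      intro σ hσ hG
      simp only [hGdef, Set.mem_ofPred_eq] at hG
      push Not at hG
      obtain ⟨i, j, h1, h2, h3, h4⟩ := hG
      refine ⟨⟨i, j, (σ ^ j) (Fin.castLE hℓ'n i)⟩, ?_, hσ, rfl⟩
      simp [L, h1, h2, h3, h4])
  rw [Finset.sum_sigma] at hunion
  have hbound : ∀ i : Fin ℓ',
      ∑ t ∈ Finset.Icc 1 (γ' i - 1) ×ˢ L,
        prob p {σ | σ ∈ A ∧ (σ ^ t.1) (Fin.castLE hℓ'n i) = t.2}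
        ≤ (ℓ : ℝ) * ((γ' i : ℝ) - 1) / ((n : ℝ) - (ℓ' : ℝ)) * prob p A := by
    intro i
    refine (Finset.sum_le_card_nsmul _ _ (prob p A / ((n : ℝ) - (ℓ' : ℝ))) fun t ht =>
      hhit i t.1 t.2 (Finset.mem_filter.mp (Finset.mem_product.mp ht).2).2.1).trans ?_
    rw [nsmul_eq_mul, Finset.card_product, Nat.card_Icc, Nat.add_sub_cancel, Nat.cast_mul,
      Nat.cast_sub (hγ' i), Nat.cast_one]
    have hg : (0 : ℝ) ≤ (γ' i : ℝ) - 1 := by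
      have : (1 : ℝ) ≤ γ' i := by exact_mod_cast hγ' i
      linarith
    have hL : (L.card : ℝ) ≤ ℓ := by exact_mod_cast hLcard
    have hq : 0 ≤ prob p A / ((n : ℝ) - (ℓ' : ℝ)) := div_nonneg hA.le hm.le
    calc ((γ' i : ℝ) - 1) * (L.card : ℝ) * (prob p A / ((n : ℝ) - (ℓ' : ℝ)))
        ≤ ((γ' i : ℝ) - 1) * (ℓ : ℝ) * (prob p A / ((n : ℝ) - (ℓ' : ℝ))) := by gcongr
      _ = _ := by ring
  have hsumle := Finset.sum_le_sum fun i (_ : i ∈ Finset.univ) => hbound i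
  rw [← Finset.sum_mul] at hsumle
  rw [le_div_iff₀ hA, sub_mul, one_mul]
  linarith
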